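/- arXiv:2311.15002 — 4 statements merged into one kernel-verified Lean document; each statement's English description precedes it below -/
import Mathlib

section
/- Let g ≥ 2 be an integer. Then ∑_{f ∣ g³−g, f ≥ 1} (μ(f)/f²)·(1 − 2·gcd(f,g)/g + gcd(f,g)²/g²) = ∏_{p ∣ g³−g} (1 − 1/p²) · (1 − (2/g)·∏_{p ∣ g} p/(p+1)), where μ is the Möbius function and the products are over primes p dividing the indicated integers. -/
open Finset ArithmeticFunction

/-!
Expanding the bracket splits the sum into three sums `∑ μ(f) gcd(f, g) ^ k / f ^ 2`, `k = 0, 1, 2`,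
over the divisors of `n = g ^ 3 - g`. Each `gcd(f, g) ^ k / f ^ 2` is multiplicative in `f`, so each
sum is the Euler product `∏ (1 - gcd(p, g) ^ k / p ^ 2)` over the primes `p ∣ n`
(`sum_moebius_mul_gcd_pow`). For `k = 0` this is the first factor of the claim. For `k = 2` it
vanishes, since the factor at a prime `p ∣ g` is `0`. For `k = 1` the factor at `p ∣ g` is
`1 - 1 / p = (1 - 1 / p ^ 2) * (p / (p + 1))`, and every other factor is `1 - 1 / p ^ 2`.
-/

/-- Unlike `IsMultiplicative.prodPrimeFactors_one_sub_of_squarefree`, this does not require `n` to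
be squarefree: the non-squarefree divisors contribute nothing, and the squarefree ones are the
divisors of the radical of `n`. -/
lemma sum_moebius_mul_eq_prod {n : ℕ} (hn : n ≠ 0) (h : ArithmeticFunction ℝ)
    (hh : h.IsMultiplicative) :
    ∑ d ∈ n.divisors, ((moebius d : ℤ) : ℝ) * h d = ∏ p ∈ n.primeFactors, (1 - h p) := by
  have hr : Squarefree (∏ p ∈ n.primeFactors, p) := by
    refine Finset.squarefree_prod_of_pairwise_isCoprime ?_ fun p hp =>
      (Nat.prime_of_mem_primeFactors hp).prime.squarefree
    intro p hp q hq hpq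
    exact Nat.coprime_iff_isRelPrime.mp ((Nat.coprime_primes (Nat.prime_of_mem_primeFactors hp)
      (Nat.prime_of_mem_primeFactors hq)).2 hpq)
  have key := IsMultiplicative.prodPrimeFactors_one_sub_of_squarefree h hh hr
  rw [Nat.primeFactors_prod_primeFactors] at key
  rw [key]
  symm
  apply Finset.sum_subset
  · exact Nat.divisors_subset_of_dvd hn (Nat.prod_primeFactors_dvd n)
  · intro d hd hd'
    rw [moebius_eq_zero_of_not_squarefree, Int.cast_zero, zero_mul]
    intro hsq
    apply hd'
    rw [Nat.mem_divisors]
    refine ⟨?_, hr.ne_zero⟩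
    rw [← Nat.prod_primeFactors_of_squarefree hsq]
    exact Finset.prod_dvd_prod_of_subset _ _ _
      (Nat.primeFactors_mono (Nat.dvd_of_mem_divisors hd) hn)

lemma sum_moebius_mul_gcd_pow {n : ℕ} (hn : n ≠ 0) (g k : ℕ) :
    ∑ d ∈ n.divisors, ((moebius d : ℤ) : ℝ) * ((Nat.gcd d g : ℝ) ^ k / (d : ℝ) ^ 2) =
      ∏ p ∈ n.primeFactors, (1 - (Nat.gcd p g : ℝ) ^ k / (p : ℝ) ^ 2) := by
  -- The value at `0` is a division by zero, hence `0`, as an arithmetic function requires.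
  let h : ArithmeticFunction ℝ := ⟨fun d => (Nat.gcd d g : ℝ) ^ k / (d : ℝ) ^ 2, by simp⟩
  refine sum_moebius_mul_eq_prod hn h ⟨by simp [h], ?_⟩
  intro a b hab
  simp only [h, coe_mk]
  rw [Nat.gcd_comm, Nat.Coprime.gcd_mul g hab, Nat.gcd_comm g a, Nat.gcd_comm g b]
  push_cast
  rw [mul_pow, mul_pow, mul_div_mul_comm]

theorem moebius_gcd_sum (g : ℕ) (hg : 2 ≤ g) :
    ∑ f ∈ (g ^ 3 - g).divisors,
        ((moebius f : ℤ) : ℝ) / (f : ℝ) ^ 2 *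
          (1 - 2 * (Nat.gcd f g : ℝ) / (g : ℝ) + (Nat.gcd f g : ℝ) ^ 2 / (g : ℝ) ^ 2) =
      (∏ p ∈ (g ^ 3 - g).primeFactors, (1 - 1 / (p : ℝ) ^ 2)) *
        (1 - 2 / (g : ℝ) * ∏ p ∈ g.primeFactors, (p : ℝ) / ((p : ℝ) + 1)) := by
  have hn : g ^ 3 - g ≠ 0 := by
    have : g ^ 1 < g ^ 3 := Nat.pow_lt_pow_right (by omega) (by norm_num)
    rw [pow_one] at this
    omega
  have hgn : g ∣ g ^ 3 - g := Nat.dvd_sub (dvd_pow_self g (by norm_num)) dvd_rfl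
  generalize g ^ 3 - g = n at hn hgn
  have hsub : g.primeFactors ⊆ n.primeFactors := Nat.primeFactors_mono hgn hn
  have h0 := sum_moebius_mul_gcd_pow hn g 0
  have h1 := sum_moebius_mul_gcd_pow hn g 1
  have h2 := sum_moebius_mul_gcd_pow hn g 2
  have e2 : ∏ p ∈ n.primeFactors, (1 - (Nat.gcd p g : ℝ) ^ 2 / (p : ℝ) ^ 2) = 0 := by
    obtain ⟨p, hp, hpg⟩ := Nat.exists_prime_and_dvd (show g ≠ 1 by omega)
    refine Finset.prod_eq_zero (i := p) (Nat.mem_primeFactors.2 ⟨hp, hpg.trans hgn, hn⟩) ?_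
    have : (p : ℝ) ≠ 0 := by exact_mod_cast hp.ne_zero
    rw [Nat.gcd_eq_left hpg, div_self (pow_ne_zero 2 this), sub_self]
  have e1 : ∏ p ∈ n.primeFactors, (1 - (Nat.gcd p g : ℝ) ^ 1 / (p : ℝ) ^ 2) =
      (∏ p ∈ n.primeFactors, (1 - 1 / (p : ℝ) ^ 2)) *
        ∏ p ∈ g.primeFactors, (p : ℝ) / ((p : ℝ) + 1) := by
    rw [← Finset.prod_sdiff hsub, ← Finset.prod_sdiff hsub, mul_assoc, ← Finset.prod_mul_distrib]
    congr 1
    · refine Finset.prod_congr rfl fun p hp => ?_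
      rw [Finset.mem_sdiff] at hp
      have hpp := Nat.prime_of_mem_primeFactors hp.1
      have hpg : ¬ p ∣ g := fun h => hp.2 (Nat.mem_primeFactors.2 ⟨hpp, h, by omega⟩)
      rw [(Nat.Prime.coprime_iff_not_dvd hpp).2 hpg]
      simp
    · refine Finset.prod_congr rfl fun p hp => ?_
      have hpp := Nat.prime_of_mem_primeFactors hp
      have : (p : ℝ) ≠ 0 := by exact_mod_cast hpp.ne_zero
      have : (p : ℝ) + 1 ≠ 0 := by positivity
      rw [Nat.gcd_eq_left (Nat.dvd_of_mem_primeFactors hp)]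
      field_simp
      ring
  rw [e2] at h2
  rw [e1] at h1
  simp only [pow_zero] at h0
  calc _ = ∑ f ∈ n.divisors, (moebius f : ℝ) * (1 / (f : ℝ) ^ 2)
        - 2 / (g : ℝ) * ∑ f ∈ n.divisors, (moebius f : ℝ) * ((Nat.gcd f g : ℝ) ^ 1 / (f : ℝ) ^ 2)
        + 1 / (g : ℝ) ^ 2 *
          ∑ f ∈ n.divisors, (moebius f : ℝ) * ((Nat.gcd f g : ℝ) ^ 2 / (f : ℝ) ^ 2) := by
        rw [Finset.mul_sum, Finset.mul_sum, ← Finset.sum_sub_distrib, ← Finset.sum_add_distrib]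
        exact Finset.sum_congr rfl fun f _ => by ring
    _ = _ := by
        rw [h0, h1, h2]
        ring
end

section
/- Let g ≥ 3 be an odd integer. Then ∑_{f ∣ g³−g, f odd, f ≥ 1} (μ(f)/f²)·(1 − 2·gcd(f,g)/g + gcd(f,g)²/g²) = (4/3)·∏_{p ∣ g³−g} (1 − 1/p²) · (1 − (2/g)·∏_{p ∣ g} p/(p+1)), where μ is the Möbius function and the products are over primes p dividing the indicated integers. -/
/-!
For `k = 0, 1, 2` the function equal to `gcd(f, g) ^ k / f ^ 2` at odd `f` and to `0` at even `f` is
multiplicative (`gcdWeight`, `gcdWeight_mult`), so its Möbius-weighted sum over the divisors of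
`N = g ^ 3 - g` is an Euler product over the primes dividing `N` (`sum_moebius_mul_eq_prod`).
Expanding the left-hand side gives a combination of these three products.

* For `k = 0` only the factor `1 - 1 / 2 ^ 2 = 3 / 4` at the prime `2 ∣ N` is missing, whence `4 / 3`.
* For `k = 1` the factor at each `p ∣ g` is `1 - 1 / p = (1 - 1 / p ^ 2) * (p / (p + 1))`.
* For `k = 2` the factor at each `p ∣ g` is `0`, and such a `p` exists, so the product vanishes.
-/

open Finset ArithmeticFunction

/-- The Euler product for a Möbius-weighted divisor sum. Only squarefree divisors of `N` contribute,
and these are the divisors of the radical of `N`. -/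
lemma sum_moebius_mul_eq_prod_s14 (F : ArithmeticFunction ℝ) (hF : F.IsMultiplicative) {N : ℕ}
    (hN : N ≠ 0) :
    ∑ d ∈ N.divisors, ((moebius d : ℤ) : ℝ) * F d = ∏ p ∈ N.primeFactors, (1 - F p) := by
  have hsq : Squarefree (∏ p ∈ N.primeFactors, p) := by
    rw [← Nat.radical_eq_prod_primeFactors]
    exact UniqueFactorizationMonoid.squarefree_radical
  have h := hF.prodPrimeFactors_one_sub_of_squarefree F hsq
  rw [Nat.primeFactors_prod_primeFactors] at h
  rw [h]
  symm
  apply Finset.sum_subset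
  · exact Nat.divisors_subset_of_dvd hN (Nat.prod_primeFactors_dvd N)
  · intro d hd hd'
    have hdvd := Nat.dvd_of_mem_divisors hd
    have : ¬ Squarefree d := by
      intro hs
      apply hd'
      rw [Nat.mem_divisors]
      refine ⟨?_, hsq.ne_zero⟩
      rw [← Nat.prod_primeFactors_of_squarefree hs]
      exact Finset.prod_dvd_prod_of_subset _ _ _ (Nat.primeFactors_mono hdvd hN)
    rw [moebius_eq_zero_of_not_squarefree this]
    simp

/-- The function `f ↦ gcd(f, g) ^ k / f ^ 2`, restricted to odd `f` by setting it to `0` at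
even `f`. -/
noncomputable def gcdWeight (g k : ℕ) : ArithmeticFunction ℝ :=
  ⟨fun f => if Odd f then (Nat.gcd f g : ℝ) ^ k / (f : ℝ) ^ 2 else 0, by simp⟩

lemma gcdWeight_apply (g k f : ℕ) :
    gcdWeight g k f = if Odd f then (Nat.gcd f g : ℝ) ^ k / (f : ℝ) ^ 2 else 0 := rfl

lemma gcdWeight_mult (g k : ℕ) : (gcdWeight g k).IsMultiplicative := by
  refine ⟨by simp [gcdWeight_apply], ?_⟩
  intro m n hmn
  simp only [gcdWeight_apply, Nat.odd_mul, hmn.mul_gcd]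
  by_cases hm : Odd m <;> by_cases hn : Odd n <;> simp [hm, hn]
  ring

theorem moebius_gcd_sum_odd (g : ℕ) (hg : 3 ≤ g) (hodd : Odd g) :
    ∑ f ∈ (g ^ 3 - g).divisors.filter (fun f => Odd f),
        ((moebius f : ℤ) : ℝ) / (f : ℝ) ^ 2 *
          (1 - 2 * (Nat.gcd f g : ℝ) / (g : ℝ) + (Nat.gcd f g : ℝ) ^ 2 / (g : ℝ) ^ 2) =
      4 / 3 * (∏ p ∈ (g ^ 3 - g).primeFactors, (1 - 1 / (p : ℝ) ^ 2)) *
        (1 - 2 / (g : ℝ) * ∏ p ∈ g.primeFactors, (p : ℝ) / ((p : ℝ) + 1)) := by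
  have hlt : g < g ^ 3 := by
    calc g = g ^ 1 := (pow_one g).symm
      _ < g ^ 3 := Nat.pow_lt_pow_right (by omega) (by norm_num)
  have hN : g ^ 3 - g ≠ 0 := by omega
  have hgN : g ∣ g ^ 3 - g := Nat.dvd_sub (dvd_pow_self g (by norm_num)) dvd_rfl
  have h2N : 2 ∣ g ^ 3 - g := (Nat.Odd.sub_odd hodd.pow hodd).two_dvd
  generalize g ^ 3 - g = N at hN hgN h2N
  have hsum : ∑ f ∈ N.divisors.filter (fun f => Odd f),
        ((moebius f : ℤ) : ℝ) / (f : ℝ) ^ 2 *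
          (1 - 2 * (Nat.gcd f g : ℝ) / (g : ℝ) + (Nat.gcd f g : ℝ) ^ 2 / (g : ℝ) ^ 2) =
      ∏ p ∈ N.primeFactors, (1 - gcdWeight g 0 p)
        - 2 / (g : ℝ) * ∏ p ∈ N.primeFactors, (1 - gcdWeight g 1 p)
        + 1 / (g : ℝ) ^ 2 * ∏ p ∈ N.primeFactors, (1 - gcdWeight g 2 p) := by
    simp only [← sum_moebius_mul_eq_prod_s14 _ (gcdWeight_mult g _) hN]
    rw [Finset.sum_filter, Finset.mul_sum, Finset.mul_sum, ← Finset.sum_sub_distrib,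
      ← Finset.sum_add_distrib]
    refine Finset.sum_congr rfl fun f _ => ?_
    simp only [gcdWeight_apply]
    split_ifs
    · ring
    · simp
  have h0 : ∏ p ∈ N.primeFactors, (1 - gcdWeight g 0 p)
      = 4 / 3 * ∏ p ∈ N.primeFactors, (1 - 1 / (p : ℝ) ^ 2) := by
    have hmem : 2 ∈ N.primeFactors := Nat.mem_primeFactors.mpr ⟨Nat.prime_two, h2N, hN⟩
    rw [← Finset.mul_prod_erase _ _ hmem, ← Finset.mul_prod_erase _ _ hmem, ← mul_assoc]
    congr 1
    · rw [gcdWeight_apply, if_neg (by decide)]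
      norm_num
    · refine Finset.prod_congr rfl fun p hp => ?_
      rw [Finset.mem_erase] at hp
      rw [gcdWeight_apply, if_pos ((Nat.prime_of_mem_primeFactors hp.2).odd_of_ne_two hp.1),
        pow_zero]
  have h1 : ∏ p ∈ N.primeFactors, (1 - gcdWeight g 1 p)
      = (∏ p ∈ N.primeFactors, (1 - gcdWeight g 0 p))
        * ∏ p ∈ g.primeFactors, (p : ℝ) / ((p : ℝ) + 1) := by
    have hfil : g.primeFactors = N.primeFactors.filter (fun p => p ∣ g) := by
      ext p
      simp only [Nat.mem_primeFactors, Finset.mem_filter]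
      exact ⟨fun h => ⟨⟨h.1, h.2.1.trans hgN, hN⟩, h.2.1⟩, fun h => ⟨h.1.1, h.2, by omega⟩⟩
    rw [hfil, Finset.prod_filter, ← Finset.prod_mul_distrib]
    refine Finset.prod_congr rfl fun p hp => ?_
    have hpp := Nat.prime_of_mem_primeFactors hp
    have hp0 : (p : ℝ) ≠ 0 := by exact_mod_cast hpp.ne_zero
    by_cases hpg : p ∣ g
    · have hpo : Odd p := hodd.of_dvd_nat hpg
      simp only [gcdWeight_apply, if_pos hpo, if_pos hpg, Nat.gcd_eq_left hpg]
      field_simp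
      ring
    · simp only [gcdWeight_apply, if_neg hpg, (hpp.coprime_iff_not_dvd.mpr hpg).gcd_eq_one]
      simp
  have h2 : ∏ p ∈ N.primeFactors, (1 - gcdWeight g 2 p) = 0 := by
    obtain ⟨p, hpp, hpg⟩ := Nat.exists_prime_and_dvd (show g ≠ 1 by omega)
    refine Finset.prod_eq_zero (i := p) (Nat.mem_primeFactors.mpr ⟨hpp, hpg.trans hgN, hN⟩) ?_
    have hp0 : (p : ℝ) ≠ 0 := by exact_mod_cast hpp.ne_zero
    rw [gcdWeight_apply, if_pos (hodd.of_dvd_nat hpg), Nat.gcd_eq_left hpg,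
      div_self (pow_ne_zero 2 hp0), sub_self]
  rw [hsum, h1, h2, h0]
  ring
end

section
/- Let g ≥ 2 be an integer. There exists a constant C > 0 depending only on g such that for all real x ≥ 1 and all positive integers d: #𝒫*(x; 0, d) ≤ C·x^{1/2}·d^{−1/2}. -/
/-!
Fix `d` coprime to `g` (otherwise nothing is counted) and consider palindromes with exactly `N`
digits. The top `k` digits of a palindrome determine its bottom `k` digits. Hence two palindromes
`n, n'` of length `N`, both divisible by `d`, which share their top `k` digits satisfy
`d * g ^ k ∣ n - n'`, while `|n - n'| < g ^ (N - k)`; if `g ^ N ≤ d * g ^ (2 * k)` they coincide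
(`eq_of_top_digits_eq`). So there are at most `g ^ k` such palindromes, and the least admissible `k`
has `g ^ k ≤ g * √(g ^ N / d)` unless it is `0`, in which case `g ^ N ≤ d` and there are none
(`card_length_le`). Summing the geometric progression over `N` (`card_lt_pow_le`) gives
`O(√(g ^ M / d))` palindromes below `g ^ M`, and `x` is compared with the next power of `g`.
-/

open Finset

/-- `𝒫*(x)`: the set of positive integers `n ≤ x` which are palindromes of base `g`
and coprime to `g³ - g`. -/
noncomputable def Pstar (g : ℕ) (x : ℝ) : Finset ℕ :=
  (Finset.Icc 1 ⌊x⌋₊).filter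
    (fun n => (Nat.digits g n).reverse = Nat.digits g n ∧ Nat.gcd n (g ^ 3 - g) = 1)

/-- `𝒫*(x; a, q)`: members of `𝒫*(x)` congruent to `a` modulo `q`. -/
noncomputable def PstarMod (g : ℕ) (x : ℝ) (a : ℤ) (q : ℕ) : Finset ℕ :=
  (Pstar g x).filter (fun n => (n : ℤ) % (q : ℤ) = a % (q : ℤ))

/-- In a palindrome the top `k` digits determine the bottom `k` digits. -/
lemma mod_pow_eq_of_div_pow_eq {g : ℕ} (hg : 2 ≤ g) {n n' N k : ℕ}
    (hn : (Nat.digits g n).reverse = Nat.digits g n)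
    (hn' : (Nat.digits g n').reverse = Nat.digits g n')
    (hl : (Nat.digits g n).length = N) (hl' : (Nat.digits g n').length = N)
    (h : n / g ^ (N - k) = n' / g ^ (N - k)) : n % g ^ k = n' % g ^ k := by
  have key : ∀ m : ℕ, (Nat.digits g m).reverse = Nat.digits g m → (Nat.digits g m).length = N →
      (Nat.digits g m).drop (N - k) = ((Nat.digits g m).take k).reverse := by
    intro m hm hml
    rw [List.reverse_take, hm, hml]
  rw [Nat.self_div_pow_eq_ofDigits_drop _ _ hg, Nat.self_div_pow_eq_ofDigits_drop _ _ hg] at h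
  have h2 : (Nat.digits g n).drop (N - k) = (Nat.digits g n').drop (N - k) := by
    refine Nat.ofDigits_inj_of_len_eq (by omega) (by simp [hl, hl']) ?_ ?_ h
    · intro l hm
      exact Nat.digits_lt_base (by omega) (List.mem_of_mem_drop hm)
    · intro l hm
      exact Nat.digits_lt_base (by omega) (List.mem_of_mem_drop hm)
  rw [key n hn hl, key n' hn' hl', List.reverse_inj] at h2
  rw [Nat.self_mod_pow_eq_ofDigits_take _ _ hg, Nat.self_mod_pow_eq_ofDigits_take _ _ hg, h2]

/-- Palindromes of length `N` divisible by `d` are separated by their top `k` digits as soon as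
`g ^ N ≤ d * g ^ (2 * k)`. -/
lemma eq_of_top_digits_eq {g : ℕ} (hg : 2 ≤ g) {d n n' N k : ℕ} (hk : k ≤ N)
    (hn : (Nat.digits g n).reverse = Nat.digits g n)
    (hn' : (Nat.digits g n').reverse = Nat.digits g n')
    (hl : (Nat.digits g n).length = N) (hl' : (Nat.digits g n').length = N)
    (hd : d ∣ n) (hd' : d ∣ n') (hc : Nat.Coprime d g) (hkN : g ^ N ≤ d * g ^ (2 * k))
    (h : n / g ^ (N - k) = n' / g ^ (N - k)) : n = n' := by
  have hmod := mod_pow_eq_of_div_pow_eq hg hn hn' hl hl' h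
  have h1 : n ≡ n' [MOD d * g ^ k] := by
    rw [← Nat.modEq_and_modEq_iff_modEq_mul (hc.pow_right k)]
    refine ⟨?_, hmod⟩
    unfold Nat.ModEq
    rw [Nat.mod_eq_zero_of_dvd hd, Nat.mod_eq_zero_of_dvd hd']
  have hpos : 0 < g ^ k := by positivity
  have hle : g ^ (N - k) ≤ d * g ^ k := by
    have e1 : g ^ N = g ^ (N - k) * g ^ k := by rw [← pow_add]; congr 1; omega
    have e2 : d * g ^ (2 * k) = d * g ^ k * g ^ k := by ring
    rw [e1, e2] at hkN
    exact Nat.le_of_mul_le_mul_right hkN hpos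
  -- `n` and `n'` agree after integer division by `g ^ (N - k)`, so they are less than that apart.
  have a1 := Nat.div_add_mod n (g ^ (N - k))
  have a2 := Nat.div_add_mod n' (g ^ (N - k))
  have b1 := Nat.mod_lt n (show 0 < g ^ (N - k) by positivity)
  have b2 := Nat.mod_lt n' (show 0 < g ^ (N - k) by positivity)
  rw [h] at a1
  generalize n % g ^ (N - k) = r at *
  generalize n' % g ^ (N - k) = r' at *
  generalize d * g ^ k = A at *
  generalize g ^ (N - k) * (n' / g ^ (N - k)) = B at *
  apply Nat.ModEq.eq_of_abs_lt h1
  rw [abs_lt]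
  constructor <;> omega

/-- Base `g` palindromes below `g ^ M` which are positive multiples of `d`. -/
def palMultiples (g d M : ℕ) : Finset ℕ :=
  (range (g ^ M)).filter
    (fun n => 0 < n ∧ (Nat.digits g n).reverse = Nat.digits g n ∧ d ∣ n)

lemma card_length_le {g : ℕ} (hg : 2 ≤ g) {d : ℕ} (hd : 0 < d) (hc : Nat.Coprime d g) (N : ℕ) :
    (((palMultiples g d N).filter (fun n => (Nat.digits g n).length = N)).card : ℝ) ≤
      g * (√g ^ N / √d) := by
  have hex : ∃ k, g ^ N ≤ d * g ^ (2 * k) := by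
    refine ⟨N, ?_⟩
    calc g ^ N ≤ g ^ (2 * N) := Nat.pow_le_pow_right (by omega) (by omega)
      _ ≤ d * g ^ (2 * N) := Nat.le_mul_of_pos_left _ hd
  classical
  set k := Nat.find hex with hkdef
  have hk : g ^ N ≤ d * g ^ (2 * k) := Nat.find_spec hex
  have hkN : k ≤ N := Nat.find_min' hex (by
    calc g ^ N ≤ g ^ (2 * N) := Nat.pow_le_pow_right (by omega) (by omega)
      _ ≤ d * g ^ (2 * N) := Nat.le_mul_of_pos_left _ hd)
  have hcard : ((palMultiples g d N).filter (fun n => (Nat.digits g n).length = N)).card ≤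
      g ^ k := by
    rw [← card_range (g ^ k)]
    refine card_le_card_of_injOn (fun n => n / g ^ (N - k)) ?_ ?_
    · intro n hn
      simp only [palMultiples, coe_filter, mem_filter, mem_range, Set.mem_ofPred_eq] at hn
      simp only [coe_range, Set.mem_Iio]
      rw [Nat.div_lt_iff_lt_mul (by positivity), ← pow_add]
      have : k + (N - k) = N := by omega
      rw [this]
      exact hn.1.1
    · intro n hn n' hn' h
      simp only [palMultiples, coe_filter, mem_filter, mem_range, Set.mem_ofPred_eq] at hn hn'
      exact eq_of_top_digits_eq hg hkN hn.1.2.2.1 hn'.1.2.2.1 hn.2 hn'.2 hn.1.2.2.2 hn'.1.2.2.2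
        hc hk h
  have hd0 : (0 : ℝ) < √d := by positivity
  rcases Nat.eq_zero_or_pos k with h0 | hpos
  · have : (palMultiples g d N).filter (fun n => (Nat.digits g n).length = N) = ∅ := by
      rw [filter_eq_empty_iff]
      intro n hn
      simp only [palMultiples, mem_filter, mem_range] at hn
      have := Nat.le_of_dvd hn.2.1 hn.2.2.2
      simp only [h0, mul_zero, pow_zero, mul_one] at hk
      omega
    rw [this]
    simp only [card_empty, Nat.cast_zero]
    positivity
  · have hmin : d * g ^ (2 * (k - 1)) < g ^ N :=
      not_le.mp (Nat.find_min hex (show k - 1 < Nat.find hex by omega))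
    have hr : (d : ℝ) * ((g : ℝ) ^ (k - 1)) ^ 2 ≤ (g : ℝ) ^ N := by
      have : ((d * g ^ (2 * (k - 1)) : ℕ) : ℝ) ≤ ((g ^ N : ℕ) : ℝ) := by exact_mod_cast hmin.le
      push_cast at this
      rwa [mul_comm 2, pow_mul] at this
    have hs : (g : ℝ) ^ (k - 1) ≤ √g ^ N / √d := by
      rw [le_div_iff₀ hd0]
      refine (sq_le_sq₀ (by positivity) (by positivity)).1 ?_
      calc ((g : ℝ) ^ (k - 1) * √d) ^ 2 = d * ((g : ℝ) ^ (k - 1)) ^ 2 := by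
            rw [mul_pow, Real.sq_sqrt (by positivity)]; ring
        _ ≤ (g : ℝ) ^ N := hr
        _ = (√g ^ N) ^ 2 := by
            rw [← pow_mul, mul_comm N, pow_mul, Real.sq_sqrt (by positivity)]
    calc (((palMultiples g d N).filter (fun n => (Nat.digits g n).length = N)).card : ℝ)
        ≤ ((g ^ k : ℕ) : ℝ) := by exact_mod_cast hcard
      _ = g * (g : ℝ) ^ (k - 1) := by
          rw [← pow_succ']; push_cast; congr 1; omega
      _ ≤ _ := by gcongr

lemma card_lt_pow_le {g : ℕ} (hg : 2 ≤ g) {d : ℕ} (hd : 0 < d) (hc : Nat.Coprime d g) (M : ℕ) :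
    ((palMultiples g d M).card : ℝ) ≤ g * √g / (√g - 1) * (√g ^ M / √d) := by
  have hr : (1 : ℝ) < √g := by
    rw [Real.lt_sqrt (by norm_num)]
    have : (2 : ℝ) ≤ g := by exact_mod_cast hg
    linarith
  have hr' : (0 : ℝ) < √g - 1 := by linarith
  induction M with
  | zero =>
    have : palMultiples g d 0 = ∅ := by
      simp only [palMultiples, filter_eq_empty_iff, mem_range]
      intro n hn
      simp only [pow_zero] at hn
      omega
    rw [this, card_empty, Nat.cast_zero]
    positivity
  | succ M ih =>
    have hsub : palMultiples g d (M + 1) ⊆ palMultiples g d M ∪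
        (palMultiples g d (M + 1)).filter (fun n => (Nat.digits g n).length = M + 1) := by
      intro n hn
      rw [mem_union, mem_filter]
      by_cases hlt : n < g ^ M
      · left
        simp only [palMultiples, mem_filter, mem_range] at hn ⊢
        exact ⟨hlt, hn.2⟩
      · right
        refine ⟨hn, ?_⟩
        simp only [palMultiples, mem_filter, mem_range] at hn
        have h1 := (Nat.digits_length_le_iff (b := g) (k := M + 1) (by omega) n).2 hn.1
        have h2 := (Nat.lt_digits_length_iff (b := g) (k := M) (by omega) n).2 (by omega)
        omega
    have h1 : ((palMultiples g d (M + 1)).card : ℝ) ≤ (palMultiples g d M).card +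
        ((palMultiples g d (M + 1)).filter (fun n => (Nat.digits g n).length = M + 1)).card := by
      exact_mod_cast (card_le_card hsub).trans (card_union_le _ _)
    have h2 := card_length_le hg hd hc (M + 1)
    calc ((palMultiples g d (M + 1)).card : ℝ)
        ≤ g * √g / (√g - 1) * (√g ^ M / √d) + g * (√g ^ (M + 1) / √d) := by linarith
      _ = g * √g / (√g - 1) * (√g ^ (M + 1) / √d) := by
          rw [pow_succ]; field_simp; ring

theorem Pstar_AP_bound (g : ℕ) (hg : 2 ≤ g) :
    ∃ C : ℝ, 0 < C ∧ ∀ x : ℝ, 1 ≤ x → ∀ d : ℕ, 0 < d →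
      ((PstarMod g x 0 d).card : ℝ) ≤
        C * x ^ ((1 : ℝ) / 2) * (d : ℝ) ^ (-(1 / 2 : ℝ)) := by
  have hr : (1 : ℝ) < √g := by
    rw [Real.lt_sqrt (by norm_num)]
    have : (2 : ℝ) ≤ g := by exact_mod_cast hg
    linarith
  have hr' : (0 : ℝ) < √g - 1 := by linarith
  refine ⟨g * √g / (√g - 1) * √g, by positivity, ?_⟩
  intro x hx d hd
  rw [Real.rpow_neg (by positivity), ← Real.sqrt_eq_rpow, ← Real.sqrt_eq_rpow]
  have hmem : ∀ n ∈ PstarMod g x 0 d, n ≤ ⌊x⌋₊ ∧ 0 < n ∧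
      (Nat.digits g n).reverse = Nat.digits g n ∧ Nat.Coprime n g ∧ d ∣ n := by
    intro n hn
    simp only [PstarMod, Pstar, mem_filter, mem_Icc] at hn
    obtain ⟨⟨⟨h1, h2⟩, h3, h4⟩, h5⟩ := hn
    refine ⟨h2, h1, h3, ?_, ?_⟩
    · exact Nat.Coprime.coprime_dvd_right
        (Nat.dvd_sub (dvd_pow_self g (by norm_num)) dvd_rfl) h4
    · rw [Int.zero_emod] at h5
      exact_mod_cast Int.dvd_of_emod_eq_zero h5
  by_cases hc : Nat.Coprime d g
  · set M := Nat.log g ⌊x⌋₊ + 1 with hM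
    have hfx : ⌊x⌋₊ ≠ 0 := (Nat.floor_pos.2 hx).ne'
    have hsub : PstarMod g x 0 d ⊆ palMultiples g d M := by
      intro n hn
      obtain ⟨h1, h2, h3, -, h5⟩ := hmem n hn
      simp only [palMultiples, mem_filter, mem_range]
      exact ⟨h1.trans_lt (Nat.lt_pow_succ_log_self (by omega) _), h2, h3, h5⟩
    have hpow : √g ^ M ≤ √g * √x := by
      have h1 : ((g ^ Nat.log g ⌊x⌋₊ : ℕ) : ℝ) ≤ x :=
        (Nat.cast_le.2 (Nat.pow_log_le_self g hfx)).trans (Nat.floor_le (by linarith))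
      push_cast at h1
      rw [hM, pow_succ']
      gcongr
      apply Real.le_sqrt_of_sq_le
      rwa [← pow_mul, mul_comm _ 2, pow_mul, Real.sq_sqrt (by positivity)]
    calc ((PstarMod g x 0 d).card : ℝ) ≤ (palMultiples g d M).card := by
          exact_mod_cast card_le_card hsub
      _ ≤ g * √g / (√g - 1) * (√g ^ M / √d) := card_lt_pow_le hg hd hc M
      _ ≤ g * √g / (√g - 1) * (√g * √x / √d) := by gcongr
      _ = _ := by rw [div_eq_mul_inv (√g * √x)]; ring
  · have : PstarMod g x 0 d = ∅ := by
      rw [eq_empty_iff_forall_notMem]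
      intro n hn
      obtain ⟨-, -, -, h4, h5⟩ := hmem n hn
      exact hc (h4.coprime_dvd_left h5)
    rw [this, card_empty, Nat.cast_zero]
    positivity
end

section
/- Let g ≥ 2 be an integer. There exists a constant C > 0 depending only on g such that for all real x ≥ 1: ∑_{x^{1/10} < d ≤ x, gcd(d, g³−g)=1} (#𝒫*(x; 0, d))² ≤ C·x^{39/40}, where the sum is over integers d in the given range coprime to g³−g. -/
/-!
The sum is at most `max_d #𝒫*(x; 0, d) · ∑_d #𝒫*(x; 0, d)`, and the second factor is at most
`∑_{n ∈ 𝒫*(x)} τ(n) ≪ #𝒫*(x) · x^ε` by the divisor bound (`card_divisors_bound`).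

The key estimate (`eq_of_palindromes`, `card_palindromes_le`) is
`#𝒫*(x; 0, d) ≪ (1 + log x) · (x / d)^{1/2}` for `d ≤ x` coprime to `g`. Two palindromes `m`, `n` with
the same number `L` of digits and the same `s` lowest digits also share their `s` highest digits,
so `|m - n| < g^(L-s)`. On the other hand `m - n` is divisible by `g^s`, and by `d` if both `m`
and `n` are, hence by `g^s d`. As soon as `g^L ≤ g^(2s) d` this forces `m = n`. Hence there are at
most `g^s` such palindromes for each `L`, and the least admissible `s` has `g^(2s) ≤ g³ x / d`.

For `d > x^{1/10}` this is `≪ x^{9/20+ε}`, and for `d = 1` it gives `#𝒫*(x) ≪ x^{1/2+ε}`. The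
product of the three factors is `≪ x^{19/20+3ε}`, and `ε = 1/120` gives the exponent `39/40`.
-/

open Finset
open scoped Classical

/-- The lower bound `2^(ε a) ≥ 1 + ε a log 2` in a form that serves both the divisor bound and the
bound for the number of digits. -/
lemma exists_succ_le_mul_rpow (ε : ℝ) (hε : 0 < ε) :
    ∃ K : ℝ, 1 ≤ K ∧ ∀ (a : ℕ) (y : ℝ), (2 : ℝ) ^ a ≤ y → (a : ℝ) + 1 ≤ K * y ^ ε := by
  have hl : 0 < Real.log 2 := Real.log_pos (by norm_num)
  have hc : 0 < ε * Real.log 2 := by positivity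
  refine ⟨1 + 1 / (ε * Real.log 2), by simp; positivity, fun a y hy => ?_⟩
  have h1 : ((2 : ℝ) ^ a) ^ ε ≤ y ^ ε := Real.rpow_le_rpow (by positivity) hy hε.le
  have h2 : ((2 : ℝ) ^ a) ^ ε = Real.exp (a * (ε * Real.log 2)) := by
    rw [Real.rpow_def_of_pos (by positivity), Real.log_pow]
    ring_nf
  have h3 := Real.add_one_le_exp (a * (ε * Real.log 2))
  have h4 : (a : ℝ) * (ε * Real.log 2) + 1 ≤ y ^ ε := by linarith
  calc (a : ℝ) + 1 ≤ (1 + 1 / (ε * Real.log 2)) * (a * (ε * Real.log 2) + 1) := by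
        have : (1 + 1 / (ε * Real.log 2)) * (a * (ε * Real.log 2) + 1)
            = a + 1 + a * (ε * Real.log 2) + 1 / (ε * Real.log 2) := by
          field_simp
          ring
        rw [this]
        have : 0 ≤ a * (ε * Real.log 2) := by positivity
        have : 0 ≤ 1 / (ε * Real.log 2) := by positivity
        linarith
    _ ≤ _ := by gcongr

/-- The divisor bound `τ(n) ≪_ε n^ε`: in `τ(n) = ∏ (a_p + 1)`, each factor is at most
`p^(ε a_p)` for large `p`, and at most a constant times that for the boundedly many other `p`. -/
lemma card_divisors_bound (ε : ℝ) (hε : 0 < ε) :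
    ∃ C : ℝ, 1 ≤ C ∧ ∀ n : ℕ, n ≠ 0 → (n.divisors.card : ℝ) ≤ C * (n : ℝ) ^ ε := by
  obtain ⟨K, hK1, hK⟩ := exists_succ_le_mul_rpow ε hε
  -- Primes `p ≥ M` satisfy `p^ε ≥ 2`.
  obtain ⟨M, hM⟩ := exists_nat_ge ((2 : ℝ) ^ (1 / ε))
  refine ⟨K ^ M, one_le_pow₀ hK1, fun n hn => ?_⟩
  have hfac : ∀ p ∈ n.primeFactors, ((n.factorization p + 1 : ℕ) : ℝ) ≤
      (if p < M then K else 1) * ((p : ℝ) ^ n.factorization p) ^ ε := by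
    intro p hp
    have hp2 : (2 : ℝ) ≤ p := by exact_mod_cast (Nat.prime_of_mem_primeFactors hp).two_le
    push_cast
    split_ifs with h
    · exact hK _ _ (by gcongr)
    · have hpM : (2 : ℝ) ^ (1 / ε) ≤ p := hM.trans (by exact_mod_cast not_lt.mp h)
      have h2 : (2 : ℝ) ≤ (p : ℝ) ^ ε := by
        calc (2 : ℝ) = ((2 : ℝ) ^ (1 / ε)) ^ ε := by
              rw [← Real.rpow_mul (by norm_num)]
              field_simp
              simp
          _ ≤ _ := Real.rpow_le_rpow (by positivity) hpM hε.le
      have h3 : ((p : ℝ) ^ n.factorization p) ^ ε = ((p : ℝ) ^ ε) ^ n.factorization p := by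
        rw [← Real.rpow_natCast, ← Real.rpow_mul (by positivity), mul_comm,
          Real.rpow_mul (by positivity), Real.rpow_natCast]
      rw [one_mul, h3]
      calc (n.factorization p : ℝ) + 1 ≤ 2 ^ n.factorization p := by
            exact_mod_cast Nat.lt_two_pow_self
        _ ≤ _ := by gcongr
  rw [Nat.card_divisors hn]
  push_cast
  calc ∏ p ∈ n.primeFactors, ((n.factorization p : ℝ) + 1)
      ≤ ∏ p ∈ n.primeFactors, ((if p < M then K else 1) * ((p : ℝ) ^ n.factorization p) ^ ε) := by
        refine Finset.prod_le_prod (fun _ _ => by positivity) fun p hp => ?_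
        exact_mod_cast hfac p hp
    _ = (∏ p ∈ n.primeFactors, if p < M then K else 1) * (n : ℝ) ^ ε := by
        rw [Finset.prod_mul_distrib, Real.finsetProd_rpow _ _ (fun _ _ => by positivity)]
        congr 2
        conv_rhs => rw [← Nat.prod_factorization_pow_eq_self hn]
        rw [Finsupp.prod, Nat.support_factorization]
        push_cast
        rfl
    _ ≤ K ^ M * (n : ℝ) ^ ε := by
        gcongr
        rw [Finset.prod_ite, Finset.prod_const, Finset.prod_const_one, mul_one]
        refine pow_le_pow_right₀ hK1 ?_
        calc _ ≤ (Finset.range M).card := Finset.card_le_card fun p hp => by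
              simp only [Finset.mem_filter] at hp
              exact Finset.mem_range.mpr hp.2
          _ = M := Finset.card_range M

/-- A palindrome with `L` digits is determined, apart from its middle `L - 2s` digits, by its lowest `s`
digits: the highest `s` are the lowest `s` reversed. -/
lemma div_pow_eq_of_palindromes {g m n s : ℕ} (hg : 2 ≤ g)
    (hm : (Nat.digits g m).reverse = Nat.digits g m)
    (hn : (Nat.digits g n).reverse = Nat.digits g n)
    (hlen : (Nat.digits g m).length = (Nat.digits g n).length)
    (hmod : m % g ^ s = n % g ^ s) :
    m / g ^ ((Nat.digits g m).length - s) = n / g ^ ((Nat.digits g m).length - s) := by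
  have htake : (Nat.digits g m).take s = (Nat.digits g n).take s := by
    refine Nat.ofDigits_inj_of_len_eq (b := g) (by omega) (by simp [hlen]) ?_ ?_ ?_
    · exact fun l hl => Nat.digits_lt_base (by omega) (List.mem_of_mem_take hl)
    · exact fun l hl => Nat.digits_lt_base (by omega) (List.mem_of_mem_take hl)
    · rw [← Nat.self_mod_pow_eq_ofDigits_take s m (by omega),
        ← Nat.self_mod_pow_eq_ofDigits_take s n (by omega), hmod]
  rw [Nat.self_div_pow_eq_ofDigits_drop _ _ (by omega),
    Nat.self_div_pow_eq_ofDigits_drop _ _ (by omega)]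
  congr 1
  have e1 := List.drop_reverse (xs := Nat.digits g m) (i := (Nat.digits g m).length - s)
  have e2 := List.drop_reverse (xs := Nat.digits g n) (i := (Nat.digits g n).length - s)
  rw [hm] at e1
  rw [hn, ← hlen] at e2
  rw [e1, e2]
  congr 1
  rcases le_total s (Nat.digits g m).length with h | h
  · rw [Nat.sub_sub_self h, htake]
  · rw [Nat.sub_eq_zero_of_le h, Nat.sub_zero]
    have := htake
    rwa [List.take_of_length_le h, List.take_of_length_le (hlen ▸ h),
      ← List.take_length (l := Nat.digits g m), ← List.take_length (l := Nat.digits g n),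
      ← hlen] at this

lemma eq_of_palindromes {g m n s d : ℕ} (hg : 2 ≤ g) (hd : Nat.Coprime g d)
    (hm : (Nat.digits g m).reverse = Nat.digits g m)
    (hn : (Nat.digits g n).reverse = Nat.digits g n)
    (hlen : (Nat.digits g m).length = (Nat.digits g n).length)
    (hmod : m % g ^ s = n % g ^ s) (hdm : d ∣ m) (hdn : d ∣ n) (hd0 : 0 < d)
    (hs : g ^ (Nat.digits g m).length ≤ g ^ (2 * s) * d) : m = n := by
  have hdiv := div_pow_eq_of_palindromes hg hm hn hlen hmod
  set L := (Nat.digits g m).length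
  have hmod' : m ≡ n [MOD g ^ s * d] := by
    refine (Nat.modEq_and_modEq_iff_modEq_mul (hd.pow_left s)).mp ⟨hmod, ?_⟩
    exact ((Nat.modEq_zero_iff_dvd).mpr hdm).trans ((Nat.modEq_zero_iff_dvd).mpr hdn).symm
  have hbound : g ^ (L - s) ≤ g ^ s * d := by
    rcases le_total s L with h | h
    · have h1 : g ^ L = g ^ s * g ^ (L - s) := by rw [← pow_add]; congr 1; omega
      have h2 : g ^ (2 * s) * d = g ^ s * (g ^ s * d) := by rw [two_mul, pow_add]; ring
      rw [h1, h2] at hs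
      exact Nat.le_of_mul_le_mul_left hs (by positivity)
    · rw [Nat.sub_eq_zero_of_le h, pow_zero]
      exact Nat.succ_le_of_lt (by positivity)
  have hpos : 0 < g ^ (L - s) := by positivity
  have a1 := Nat.mul_div_le m (g ^ (L - s))
  have a2 := Nat.mul_div_le n (g ^ (L - s))
  have b1 := Nat.lt_mul_div_succ m hpos
  have b2 := Nat.lt_mul_div_succ n hpos
  rw [hdiv] at a1 b1
  rw [mul_add, mul_one] at b1 b2
  rcases le_total m n with h | h
  · have hdvd := (Nat.modEq_iff_dvd' h).mp hmod'
    have := Nat.eq_zero_of_dvd_of_lt hdvd (lt_of_lt_of_le (by omega) hbound)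
    omega
  · have hdvd := (Nat.modEq_iff_dvd' h).mp hmod'.symm
    have := Nat.eq_zero_of_dvd_of_lt hdvd (lt_of_lt_of_le (by omega) hbound)
    omega

lemma mem_PstarMod_zero {g d n : ℕ} {x : ℝ} :
    n ∈ PstarMod g x 0 d ↔ n ∈ Pstar g x ∧ d ∣ n := by
  rw [PstarMod, Finset.mem_filter]
  refine and_congr_right fun _ => ?_
  rw [Int.zero_emod, ← Int.dvd_iff_emod_eq_zero, Int.natCast_dvd_natCast]

/-- Counting by the number of digits and the residue modulo `g^s`, which together determine the
palindrome by `eq_of_palindromes`. -/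
lemma card_palindromes_le {g d s : ℕ} {x : ℝ} (hg : 2 ≤ g) (hd : Nat.Coprime g d) (hd0 : 0 < d)
    (hs : g * ⌊x⌋₊ ≤ g ^ (2 * s) * d) :
    (PstarMod g x 0 d).card ≤ ((Nat.digits g ⌊x⌋₊).length + 1) * g ^ s := by
  have key : ∀ n ∈ PstarMod g x 0 d, n ≠ 0 ∧ n ≤ ⌊x⌋₊ ∧
      (Nat.digits g n).reverse = Nat.digits g n ∧ d ∣ n := by
    intro n hn
    obtain ⟨hn, hdvd⟩ := mem_PstarMod_zero.mp hn
    rw [Pstar, Finset.mem_filter, Finset.mem_Icc] at hn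
    exact ⟨by omega, hn.1.2, hn.2.1, hdvd⟩
  have := Finset.card_le_card_of_injOn
    (s := PstarMod g x 0 d)
    (t := Finset.range ((Nat.digits g ⌊x⌋₊).length + 1) ×ˢ Finset.range (g ^ s))
    (fun n => ((Nat.digits g n).length, n % g ^ s)) ?_ ?_
  · simpa using this
  · intro n hn
    obtain ⟨-, h2, -⟩ := key n hn
    simp only [Finset.coe_product, Set.mem_prod, Finset.mem_coe, Finset.mem_range]
    exact ⟨Nat.lt_succ_of_le (Nat.le_length_digits_le g _ _ h2), Nat.mod_lt _ (by positivity)⟩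
  · intro m hm n hn hmn
    obtain ⟨hm0, hmx, hmp, hdm⟩ := key m hm
    obtain ⟨-, -, hnp, hdn⟩ := key n hn
    simp only [Prod.mk.injEq] at hmn
    refine eq_of_palindromes hg hd hmp hnp hmn.1 hmn.2 hdm hdn hd0 ?_
    calc _ ≤ g * m := Nat.base_pow_length_digits_le g m (by omega) hm0
      _ ≤ g * ⌊x⌋₊ := by gcongr
      _ ≤ _ := hs

lemma exists_scale {g d N : ℕ} (hg : 2 ≤ g) (hd0 : 0 < d) (hdN : d ≤ N) :
    ∃ s : ℕ, g * N ≤ g ^ (2 * s) * d ∧ g ^ (2 * s) * d ≤ g ^ 3 * N := by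
  have hex : ∃ s : ℕ, g * N ≤ g ^ (2 * s) * d := by
    refine ⟨g * N, ?_⟩
    calc g * N ≤ g ^ (g * N) := (Nat.lt_pow_self (by omega)).le
      _ ≤ g ^ (2 * (g * N)) := Nat.pow_le_pow_right (by omega) (by omega)
      _ ≤ _ := Nat.le_mul_of_pos_right _ hd0
  refine ⟨Nat.find hex, Nat.find_spec hex, ?_⟩
  rcases h : Nat.find hex with _ | k
  · rw [mul_zero, pow_zero]
    exact Nat.mul_le_mul (Nat.one_le_pow _ _ (by omega)) hdN
  · have := Nat.find_min hex (m := k) (by omega)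
    calc g ^ (2 * (k + 1)) * d = g ^ 2 * (g ^ (2 * k) * d) := by ring
      _ ≤ g ^ 2 * (g * N) := Nat.mul_le_mul_left _ (not_le.mp this).le
      _ = _ := by ring

/-- With `θ = 1/10` this is applied to the moduli in the sum, with `θ = 0` to `d = 1`. -/
lemma card_PstarMod_le {g d : ℕ} {x θ : ℝ} (hg : 2 ≤ g) (hd : Nat.Coprime g d) (hd0 : 0 < d)
    (hx : 1 ≤ x) (hdx : d ≤ ⌊x⌋₊) (hθ : x ^ θ ≤ d) :
    ((PstarMod g x 0 d).card : ℝ) ≤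
      ((Nat.digits g ⌊x⌋₊).length + 1) * (g ^ 2 * x ^ ((1 - θ) / 2)) := by
  obtain ⟨s, hs1, hs2⟩ := exists_scale hg hd0 hdx
  have hx0 : 0 < x := by linarith
  have hcard : ((PstarMod g x 0 d).card : ℝ) ≤ ((Nat.digits g ⌊x⌋₊).length + 1) * (g : ℝ) ^ s := by
    exact_mod_cast card_palindromes_le hg hd hd0 hs1
  refine hcard.trans ?_
  gcongr
  refine le_of_sq_le_sq ?_ (by positivity)
  have hg1 : (1 : ℝ) ≤ g := by exact_mod_cast (by omega : 1 ≤ g)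
  have hs2' : ((g : ℝ) ^ s) ^ 2 * d ≤ g ^ 3 * x := by
    calc ((g : ℝ) ^ s) ^ 2 * d = g ^ (2 * s) * d := by rw [← pow_mul, mul_comm s]
      _ ≤ g ^ 3 * (⌊x⌋₊ : ℝ) := by exact_mod_cast hs2
      _ ≤ _ := by gcongr; exact Nat.floor_le hx0.le
  have hpos : 0 < x ^ θ := by positivity
  have hsplit : (x ^ ((1 - θ) / 2)) ^ 2 * x ^ θ = x := by
    rw [← Real.rpow_natCast, ← Real.rpow_mul hx0.le, ← Real.rpow_add hx0]
    have : (1 - θ) / 2 * ((2 : ℕ) : ℝ) + θ = 1 := by push_cast; ring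
    rw [this, Real.rpow_one]
  refine le_of_mul_le_mul_right ?_ hpos
  calc ((g : ℝ) ^ s) ^ 2 * x ^ θ ≤ ((g : ℝ) ^ s) ^ 2 * d := by gcongr
    _ ≤ g ^ 3 * x := hs2'
    _ ≤ g ^ 4 * x := by gcongr; norm_num
    _ = (g ^ 2 * x ^ ((1 - θ) / 2)) ^ 2 * x ^ θ := by
        conv_lhs => rw [← hsplit]
        ring

lemma coprime_base_of_gcd {g d : ℕ} (h : Nat.gcd d (g ^ 3 - g) = 1) :
    Nat.Coprime g d := by
  have hdvd : g ∣ g ^ 3 - g := Nat.dvd_sub (dvd_pow_self g (by norm_num)) dvd_rfl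
  exact (Nat.Coprime.coprime_dvd_right hdvd h).symm

theorem Pstar_tail_sum_bound (g : ℕ) (hg : 2 ≤ g) :
    ∃ C : ℝ, 0 < C ∧ ∀ x : ℝ, 1 ≤ x →
      ∑ d ∈ (Finset.Icc 1 ⌊x⌋₊).filter
          (fun d : ℕ => x ^ ((1 : ℝ) / 10) < (d : ℝ) ∧ Nat.gcd d (g ^ 3 - g) = 1),
        ((PstarMod g x 0 d).card : ℝ) ^ 2 ≤ C * x ^ ((39 : ℝ) / 40) := by
  obtain ⟨K, hK1, hK⟩ := exists_succ_le_mul_rpow (1 / 120) (by norm_num)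
  obtain ⟨T, hT1, hT⟩ := card_divisors_bound (1 / 120) (by norm_num)
  have hg0 : (0 : ℝ) < g := by exact_mod_cast (by omega : 0 < g)
  set A : ℝ := K * (g : ℝ) ^ ((1 : ℝ) / 120) * g ^ 2 with hA
  have hA0 : 0 < A := by positivity
  refine ⟨A * (T * A), by positivity, fun x hx => ?_⟩
  have hx0 : 0 < x := by linarith
  have hN : 1 ≤ ⌊x⌋₊ := Nat.le_floor (by simpa using hx)
  have hNx : (⌊x⌋₊ : ℝ) ≤ x := Nat.floor_le hx0.le
  set S := (Finset.Icc 1 ⌊x⌋₊).filter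
    (fun d : ℕ => x ^ ((1 : ℝ) / 10) < (d : ℝ) ∧ Nat.gcd d (g ^ 3 - g) = 1) with hS
  have hlen : ((Nat.digits g ⌊x⌋₊).length : ℝ) + 1 ≤
      K * (g : ℝ) ^ ((1 : ℝ) / 120) * x ^ ((1 : ℝ) / 120) := by
    have h1 : (2 : ℝ) ^ (Nat.digits g ⌊x⌋₊).length ≤ g * x := by
      calc (2 : ℝ) ^ (Nat.digits g ⌊x⌋₊).length ≤ (g : ℝ) ^ (Nat.digits g ⌊x⌋₊).length := by
            gcongr
            exact_mod_cast hg
        _ ≤ (g : ℝ) * ⌊x⌋₊ := by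
            exact_mod_cast Nat.base_pow_length_digits_le g ⌊x⌋₊ (by omega) (by omega)
        _ ≤ g * x := by gcongr
    have h2 := hK _ _ h1
    rwa [Real.mul_rpow hg0.le hx0.le, ← mul_assoc] at h2
  have hcount : ∀ (d : ℕ) (θ : ℝ), Nat.Coprime g d → 0 < d → d ≤ ⌊x⌋₊ → x ^ θ ≤ d →
      ((PstarMod g x 0 d).card : ℝ) ≤ A * x ^ ((1 : ℝ) / 120 + (1 - θ) / 2) := by
    intro d θ hd hd0 hdx hθ
    refine (card_PstarMod_le hg hd hd0 hx hdx hθ).trans ?_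
    calc _ ≤ (K * (g : ℝ) ^ ((1 : ℝ) / 120) * x ^ ((1 : ℝ) / 120)) *
          (g ^ 2 * x ^ ((1 - θ) / 2)) := by gcongr
      _ = _ := by rw [hA, Real.rpow_add hx0]; ring
  have hP : ((Pstar g x).card : ℝ) ≤ A * x ^ ((1 : ℝ) / 120 + (1 - 0) / 2) := by
    have h := hcount 1 0 (Nat.coprime_one_right g) one_pos hN (by simp)
    have he : PstarMod g x 0 1 = Pstar g x := by
      ext n
      simp [mem_PstarMod_zero]
    rwa [he] at h
  have hmax : ∀ d ∈ S, ((PstarMod g x 0 d).card : ℝ) ≤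
      A * x ^ ((1 : ℝ) / 120 + (1 - 1 / 10) / 2) := by
    intro d hd
    rw [hS, Finset.mem_filter, Finset.mem_Icc] at hd
    exact hcount d _ (coprime_base_of_gcd hd.2.2) hd.1.1 hd.1.2 hd.2.1.le
  have hdouble : ∑ d ∈ S, ((PstarMod g x 0 d).card : ℝ) ≤
      (Pstar g x).card * (T * x ^ ((1 : ℝ) / 120)) := by
    have hswap : ∑ d ∈ S, (PstarMod g x 0 d).card ≤ ∑ n ∈ Pstar g x, n.divisors.card := by
      have h1 : ∀ d ∈ S, (PstarMod g x 0 d).card = ((Pstar g x).filter (fun n => d ∣ n)).card := by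
        intro d _
        congr 1
        ext n
        rw [mem_PstarMod_zero, Finset.mem_filter]
      rw [Finset.sum_congr rfl h1]
      have h2 := Finset.sum_card_bipartiteAbove_eq_sum_card_bipartiteBelow
        (s := S) (t := Pstar g x) (fun d n : ℕ => d ∣ n)
      simp only [Finset.bipartiteAbove, Finset.bipartiteBelow] at h2
      rw [h2]
      refine Finset.sum_le_sum fun n hn => Finset.card_le_card fun d hd => ?_
      rw [Pstar, Finset.mem_filter, Finset.mem_Icc] at hn
      rw [Finset.mem_filter] at hd
      exact Nat.mem_divisors.mpr ⟨hd.2, by omega⟩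
    calc ∑ d ∈ S, ((PstarMod g x 0 d).card : ℝ) ≤ ∑ n ∈ Pstar g x, (n.divisors.card : ℝ) := by
          exact_mod_cast hswap
      _ ≤ ∑ n ∈ Pstar g x, T * x ^ ((1 : ℝ) / 120) := by
          refine Finset.sum_le_sum fun n hn => ?_
          rw [Pstar, Finset.mem_filter, Finset.mem_Icc] at hn
          refine (hT n (by omega)).trans ?_
          gcongr
          exact le_trans (by exact_mod_cast hn.1.2) hNx
      _ = _ := by rw [Finset.sum_const, nsmul_eq_mul]
  calc ∑ d ∈ S, ((PstarMod g x 0 d).card : ℝ) ^ 2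
      ≤ ∑ d ∈ S, A * x ^ ((1 : ℝ) / 120 + (1 - 1 / 10) / 2) * ((PstarMod g x 0 d).card : ℝ) := by
        refine Finset.sum_le_sum fun d hd => ?_
        rw [sq]
        exact mul_le_mul_of_nonneg_right (hmax d hd) (by positivity)
    _ = A * x ^ ((1 : ℝ) / 120 + (1 - 1 / 10) / 2) * ∑ d ∈ S, ((PstarMod g x 0 d).card : ℝ) := by
        rw [Finset.mul_sum]
    _ ≤ A * x ^ ((1 : ℝ) / 120 + (1 - 1 / 10) / 2) *
          ((A * x ^ ((1 : ℝ) / 120 + (1 - 0) / 2)) * (T * x ^ ((1 : ℝ) / 120))) := by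
        gcongr
        exact hdouble.trans (by gcongr)
    _ = A * (T * A) * (x ^ ((1 : ℝ) / 120 + (1 - 1 / 10) / 2) *
          x ^ ((1 : ℝ) / 120 + (1 - 0) / 2) * x ^ ((1 : ℝ) / 120)) := by ring
    _ = A * (T * A) * x ^ ((39 : ℝ) / 40) := by
        rw [← Real.rpow_add hx0, ← Real.rpow_add hx0]
        norm_num
end
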